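/- Let η, ū : ℝ² → ℝ be infinitely differentiable functions of (x,t) with η(x,t) > 0 for all (x,t), and let ρ ≠ 0, g, ε be real constants. Define v = (η³ ū_x)_x / (3η) and μ = ρ(ū − ε² v). Assume η and ū satisfy the Serre–Green–Naghdi system: η_t + (η ū)_x = 0 and ū_t + ū ū_x + g η_x − (ε²/(3η)) ( η³ ( ū_{tx} + ū ū_{xx} − ū_x² ) )_x = 0. Then pointwise on ℝ²: μ_t + (1/ρ) μ μ_x + g ρ η_x − (ε²/(2ρ)) (η² μ_x²)_x = ρ ε⁴ ( v v_x + (η² ū_x v_x)_x ) − (ρ ε⁶ / 2) (η² v_x²)_x; in particular (η, μ) satisfies the second canonical water-wave (Hamiltonian) equation up to the displayed explicit O(ε⁴) remainder. -/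

import Mathlib

/-- Partial derivative in the spatial variable `x` (first argument). -/
noncomputable def dX (f : ℝ → ℝ → ℝ) : ℝ → ℝ → ℝ :=
  fun x t => deriv (fun x' => f x' t) x

/-- Partial derivative in time `t` (second argument). -/
noncomputable def dT (f : ℝ → ℝ → ℝ) : ℝ → ℝ → ℝ :=
  fun x t => deriv (fun t' => f x t') t

/-!
Let `D = ∂ₜ + u ∂ₓ`. The continuity equation says `Dη = -η uₓ`, or equivalently that
`(η f)ₜ + (u η f)ₓ = η Df` for every `f`. Since `3 η v = Pₓ` with `P = η³ uₓ`, this gives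
`3 η Dv = (Pₓ)ₜ + (u Pₓ)ₓ = (DP)ₓ`, where `DP = η³ (D uₓ - 3 uₓ²)`. Rearranging,
`vₜ + (u v)ₓ = (η³ (D uₓ - uₓ²))ₓ / (3 η) - (η² uₓ²)ₓ / 2`,
and the first term on the right is the dispersive term of the momentum equation. Hence, when
`u - ε² v` is inserted into the canonical equation, all terms of order at most `ε²` cancel.
-/

open Function (uncurry)

section PartialDerivatives

variable {f h k : ℝ → ℝ → ℝ}

lemma differentiable_fst_section (hf : Differentiable ℝ (uncurry f)) (t : ℝ) :
    Differentiable ℝ (fun x => f x t) :=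
  hf.comp (differentiable_id.prodMk (differentiable_const t))

lemma differentiable_snd_section (hf : Differentiable ℝ (uncurry f)) (x : ℝ) :
    Differentiable ℝ (fun t => f x t) :=
  hf.comp ((differentiable_const x).prodMk differentiable_id)

lemma dX_const_smul (c : ℝ) (f : ℝ → ℝ → ℝ) : dX (c • f) = c • dX f := by
  funext x t
  exact deriv_const_mul_field c

lemma dT_const_smul (c : ℝ) (f : ℝ → ℝ → ℝ) : dT (c • f) = c • dT f := by
  funext x t
  exact deriv_const_mul_field c

lemma dX_add (hf : Differentiable ℝ (uncurry f)) (hh : Differentiable ℝ (uncurry h)) :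
    dX (f + h) = dX f + dX h := by
  funext x t
  exact deriv_add (differentiable_fst_section hf t x) (differentiable_fst_section hh t x)

lemma dX_sub (hf : Differentiable ℝ (uncurry f)) (hh : Differentiable ℝ (uncurry h)) :
    dX (f - h) = dX f - dX h := by
  funext x t
  exact deriv_sub (differentiable_fst_section hf t x) (differentiable_fst_section hh t x)

lemma dT_sub (hf : Differentiable ℝ (uncurry f)) (hh : Differentiable ℝ (uncurry h)) :
    dT (f - h) = dT f - dT h := by
  funext x t
  exact deriv_sub (differentiable_snd_section hf x t) (differentiable_snd_section hh x t)

lemma dX_mul (hf : Differentiable ℝ (uncurry f)) (hh : Differentiable ℝ (uncurry h)) :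
    dX (f * h) = dX f * h + f * dX h := by
  funext x t
  exact deriv_mul (differentiable_fst_section hf t x) (differentiable_fst_section hh t x)

lemma dT_mul (hf : Differentiable ℝ (uncurry f)) (hh : Differentiable ℝ (uncurry h)) :
    dT (f * h) = dT f * h + f * dT h := by
  funext x t
  exact deriv_mul (differentiable_snd_section hf x t) (differentiable_snd_section hh x t)

lemma dX_pow (hf : Differentiable ℝ (uncurry f)) (n : ℕ) :
    dX (f ^ n) = n * f ^ (n - 1) * dX f := by
  funext x t
  exact deriv_pow (differentiable_fst_section hf t x) n

lemma dT_pow (hf : Differentiable ℝ (uncurry f)) (n : ℕ) :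
    dT (f ^ n) = n * f ^ (n - 1) * dT f := by
  funext x t
  exact deriv_pow (differentiable_snd_section hf x t) n

lemma uncurry_dX_eq_fderiv (hf : Differentiable ℝ (uncurry f)) :
    uncurry (dX f) = fun p => fderiv ℝ (uncurry f) p (1, 0) := by
  funext p
  exact ((hf p).hasFDerivAt.comp_hasDerivAt p.1
    ((hasDerivAt_id p.1).prodMk (hasDerivAt_const p.1 p.2))).deriv

lemma uncurry_dT_eq_fderiv (hf : Differentiable ℝ (uncurry f)) :
    uncurry (dT f) = fun p => fderiv ℝ (uncurry f) p (0, 1) := by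
  funext p
  exact ((hf p).hasFDerivAt.comp_hasDerivAt p.2
    ((hasDerivAt_const p.2 p.1).prodMk (hasDerivAt_id p.2))).deriv

lemma contDiff_uncurry_dX {m n : WithTop ℕ∞} (hf : ContDiff ℝ n (uncurry f)) (hmn : m + 1 ≤ n) :
    ContDiff ℝ m (uncurry (dX f)) := by
  have hn : n ≠ 0 := (one_pos.trans_le (le_add_self.trans hmn)).ne'
  rw [uncurry_dX_eq_fderiv (hf.differentiable hn)]
  exact (hf.fderiv_right hmn).clm_apply contDiff_const

lemma contDiff_uncurry_dT {m n : WithTop ℕ∞} (hf : ContDiff ℝ n (uncurry f)) (hmn : m + 1 ≤ n) :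
    ContDiff ℝ m (uncurry (dT f)) := by
  have hn : n ≠ 0 := (one_pos.trans_le (le_add_self.trans hmn)).ne'
  rw [uncurry_dT_eq_fderiv (hf.differentiable hn)]
  exact (hf.fderiv_right hmn).clm_apply contDiff_const

lemma differentiable_uncurry_dX (hf : ContDiff ℝ 2 (uncurry f)) :
    Differentiable ℝ (uncurry (dX f)) :=
  (contDiff_uncurry_dX (m := 1) hf (by norm_num)).differentiable one_ne_zero

lemma differentiable_uncurry_dT (hf : ContDiff ℝ 2 (uncurry f)) :
    Differentiable ℝ (uncurry (dT f)) :=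
  (contDiff_uncurry_dT (m := 1) hf (by norm_num)).differentiable one_ne_zero

lemma dT_dX_comm (hf : ContDiff ℝ 2 (uncurry f)) : dT (dX f) = dX (dT f) := by
  have hf' : Differentiable ℝ (uncurry f) := hf.differentiable two_ne_zero
  have hdf : Differentiable ℝ (fderiv ℝ (uncurry f)) :=
    (hf.fderiv_right (m := 1) (by norm_num)).differentiable one_ne_zero
  have hfx : Differentiable ℝ (uncurry (dX f)) := differentiable_uncurry_dX hf
  have hft : Differentiable ℝ (uncurry (dT f)) := differentiable_uncurry_dT hf
  have hsymm (p : ℝ × ℝ) : IsSymmSndFDerivAt ℝ (uncurry f) p :=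
    hf.contDiffAt.isSymmSndFDerivAt (by simp)
  refine Function.uncurry_injective ?_
  rw [uncurry_dT_eq_fderiv hfx, uncurry_dX_eq_fderiv hft, uncurry_dX_eq_fderiv hf',
    uncurry_dT_eq_fderiv hf']
  funext p
  simpa [fderiv_clm_apply (hdf p)] using hsymm p (0, 1) (1, 0)

lemma dX_mul_sub_smul_sq (hf : Differentiable ℝ (uncurry f)) (hh : Differentiable ℝ (uncurry h))
    (hk : Differentiable ℝ (uncurry k)) (c : ℝ) :
    dX (f * (h - c • k) ^ 2) =
      dX (f * h ^ 2) - (2 * c) • dX (f * h * k) + c ^ 2 • dX (f * k ^ 2) := by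
  have hexpand : f * (h - c • k) ^ 2 =
      f * h ^ 2 - (2 * c) • (f * h * k) + c ^ 2 • (f * k ^ 2) := by
    funext x t
    simp only [Pi.mul_apply, Pi.pow_apply, Pi.sub_apply, Pi.add_apply, Pi.smul_apply, smul_eq_mul]
    ring
  have hfhh : Differentiable ℝ (uncurry (f * h ^ 2)) := hf.mul (hh.pow 2)
  have hfhk : Differentiable ℝ (uncurry ((2 * c) • (f * h * k))) :=
    ((hf.mul hh).mul hk).const_smul (2 * c)
  have hfkk : Differentiable ℝ (uncurry (c ^ 2 • (f * k ^ 2))) :=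
    (hf.mul (hk.pow 2)).const_smul (c ^ 2)
  have hdiff : Differentiable ℝ (uncurry (f * h ^ 2 - (2 * c) • (f * h * k))) := hfhh.sub hfhk
  rw [hexpand, dX_add hdiff hfkk, dX_sub hfhh hfhk, dX_const_smul, dX_const_smul]

lemma four_mul_dX_pow_three_mul_sq (hf : Differentiable ℝ (uncurry f))
    (hh : Differentiable ℝ (uncurry h)) :
    4 * dX (f ^ 3 * h ^ 2) = 2 * (h * dX (f ^ 3 * h)) + 3 * (f * dX (f ^ 2 * h ^ 2)) := by
  have hf2 : Differentiable ℝ (uncurry (f ^ 2)) := hf.pow 2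
  have hf3 : Differentiable ℝ (uncurry (f ^ 3)) := hf.pow 3
  have hh2 : Differentiable ℝ (uncurry (h ^ 2)) := hh.pow 2
  rw [dX_mul hf3 hh2, dX_mul hf3 hh, dX_mul hf2 hh2, dX_pow hf, dX_pow hf, dX_pow hh]
  push_cast
  ring

lemma two_mul_dX_pow_three_mul_sub_three_mul_sq (hf : Differentiable ℝ (uncurry f))
    (hh : Differentiable ℝ (uncurry h)) (hk : Differentiable ℝ (uncurry k)) :
    2 * dX (f ^ 3 * (k - 3 * h ^ 2)) =
      2 * dX (f ^ 3 * (k - h ^ 2)) - 2 * (h * dX (f ^ 3 * h)) - 3 * (f * dX (f ^ 2 * h ^ 2)) := by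
  have hsplit : f ^ 3 * (k - 3 * h ^ 2) =
      f ^ 3 * (k - h ^ 2) - (f ^ 3 * h ^ 2 + f ^ 3 * h ^ 2) := by
    ring
  have hfk : Differentiable ℝ (uncurry (f ^ 3 * (k - h ^ 2))) := (hf.pow 3).mul (hk.sub (hh.pow 2))
  have hfh : Differentiable ℝ (uncurry (f ^ 3 * h ^ 2)) := (hf.pow 3).mul (hh.pow 2)
  have hfh2 : Differentiable ℝ (uncurry (f ^ 3 * h ^ 2 + f ^ 3 * h ^ 2)) := hfh.add hfh
  rw [hsplit, dX_sub hfk hfh2, dX_add hfh hfh]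
  linear_combination -four_mul_dX_pow_three_mul_sq hf hh

end PartialDerivatives

section MaterialDerivative

/-- The material derivative `f_t + u f_x`, i.e. the rate of change of `f` along the flow of the
velocity field `u`. -/
noncomputable def materialDeriv (u f : ℝ → ℝ → ℝ) : ℝ → ℝ → ℝ :=
  dT f + u * dX f

variable {u f h η : ℝ → ℝ → ℝ}

lemma materialDeriv_mul (u : ℝ → ℝ → ℝ) (hf : Differentiable ℝ (uncurry f))
    (hh : Differentiable ℝ (uncurry h)) :
    materialDeriv u (f * h) = materialDeriv u f * h + f * materialDeriv u h := by
  simp only [materialDeriv, dX_mul hf hh, dT_mul hf hh]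
  ring

lemma materialDeriv_pow (u : ℝ → ℝ → ℝ) (hf : Differentiable ℝ (uncurry f)) (n : ℕ) :
    materialDeriv u (f ^ n) = n * f ^ (n - 1) * materialDeriv u f := by
  simp only [materialDeriv, dX_pow hf, dT_pow hf]
  ring

lemma dX_materialDeriv (hu : Differentiable ℝ (uncurry u)) (hf : ContDiff ℝ 2 (uncurry f)) :
    dX (materialDeriv u f) = dT (dX f) + dX (u * dX f) := by
  have hfx : Differentiable ℝ (uncurry (dX f)) := differentiable_uncurry_dX hf
  have hft : Differentiable ℝ (uncurry (dT f)) := differentiable_uncurry_dT hf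
  have hufx : Differentiable ℝ (uncurry (u * dX f)) := hu.mul hfx
  rw [materialDeriv, dX_add hft hufx, dT_dX_comm hf]

lemma materialDeriv_eq_of_continuity (hη : Differentiable ℝ (uncurry η))
    (hu : Differentiable ℝ (uncurry u)) (hmass : dT η + dX (η * u) = 0) :
    materialDeriv u η = -(η * dX u) := by
  rw [dX_mul hη hu] at hmass
  rw [materialDeriv]
  linear_combination hmass

lemma dT_mul_add_dX_mul_of_continuity (hη : Differentiable ℝ (uncurry η))
    (hu : Differentiable ℝ (uncurry u)) (hf : Differentiable ℝ (uncurry f))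
    (hmass : dT η + dX (η * u) = 0) :
    dT (η * f) + dX (u * (η * f)) = η * materialDeriv u f := by
  have hηu : Differentiable ℝ (uncurry (η * u)) := hη.mul hu
  rw [← mul_assoc, mul_comm u η, dT_mul hη hf, dX_mul hηu hf, materialDeriv]
  linear_combination f * hmass

lemma materialDeriv_pow_three_mul_dX (hη : Differentiable ℝ (uncurry η))
    (hu : Differentiable ℝ (uncurry u)) (hux : Differentiable ℝ (uncurry (dX u)))
    (hmass : dT η + dX (η * u) = 0) :
    materialDeriv u (η ^ 3 * dX u) = η ^ 3 * (materialDeriv u (dX u) - 3 * dX u ^ 2) := by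
  have hη3 : Differentiable ℝ (uncurry (η ^ 3)) := hη.pow 3
  rw [materialDeriv_mul u hη3 hux, materialDeriv_pow u hη,
    materialDeriv_eq_of_continuity hη hu hmass]
  push_cast
  ring

end MaterialDerivative

section DispersiveVelocity

/-- The dispersive correction `v = (η³ u_x)_x / (3 η)`: the canonical momentum per unit density is
`u - ε² v`. It takes the junk value `0` where `η` vanishes. -/
noncomputable def dispersiveVelocity (η u : ℝ → ℝ → ℝ) : ℝ → ℝ → ℝ :=
  fun x t => dX (η ^ 3 * dX u) x t / (3 * η x t)

variable {η u : ℝ → ℝ → ℝ}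

lemma smul_mul_dispersiveVelocity (hη₀ : ∀ x t, η x t ≠ 0) (u : ℝ → ℝ → ℝ) :
    (3 : ℝ) • (η * dispersiveVelocity η u) = dX (η ^ 3 * dX u) := by
  funext x t
  have hηxt := hη₀ x t
  simp only [dispersiveVelocity, Pi.mul_apply, Pi.smul_apply, smul_eq_mul]
  field_simp

lemma contDiff_uncurry_dispersiveVelocity {n : WithTop ℕ∞} (hη : ContDiff ℝ (n + 1) (uncurry η))
    (hu : ContDiff ℝ (n + 2) (uncurry u)) (hη₀ : ∀ x t, η x t ≠ 0) :
    ContDiff ℝ n (uncurry (dispersiveVelocity η u)) := by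
  have hux : ContDiff ℝ (n + 1) (uncurry (dX u)) :=
    contDiff_uncurry_dX hu (by rw [add_assoc, one_add_one_eq_two])
  have hflux : ContDiff ℝ (n + 1) (uncurry (η ^ 3 * dX u)) := (hη.pow 3).mul hux
  exact (contDiff_uncurry_dX hflux le_rfl).div
    (contDiff_const.mul (hη.of_le le_self_add))
    fun p => mul_ne_zero three_ne_zero (hη₀ p.1 p.2)

lemma differentiable_uncurry_dispersiveVelocity (hη : ContDiff ℝ 2 (uncurry η))
    (hu : ContDiff ℝ 3 (uncurry u)) (hη₀ : ∀ x t, η x t ≠ 0) :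
    Differentiable ℝ (uncurry (dispersiveVelocity η u)) :=
  (contDiff_uncurry_dispersiveVelocity (n := 1) (hη.of_le (by norm_num)) (hu.of_le (by norm_num))
    hη₀).differentiable one_ne_zero

lemma smul_mul_materialDeriv_dispersiveVelocity (hη : ContDiff ℝ 2 (uncurry η))
    (hu : ContDiff ℝ 3 (uncurry u)) (hη₀ : ∀ x t, η x t ≠ 0)
    (hmass : dT η + dX (η * u) = 0) :
    (3 : ℝ) • (η * materialDeriv u (dispersiveVelocity η u)) =
      dX (η ^ 3 * (materialDeriv u (dX u) - 3 * dX u ^ 2)) := by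
  set v := dispersiveVelocity η u with hv
  have hux : ContDiff ℝ 2 (uncurry (dX u)) := contDiff_uncurry_dX hu (by norm_num)
  have hflux : ContDiff ℝ 2 (uncurry (η ^ 3 * dX u)) := (hη.pow 3).mul hux
  have hη' : Differentiable ℝ (uncurry η) := hη.differentiable two_ne_zero
  have hu' : Differentiable ℝ (uncurry u) := hu.differentiable three_ne_zero
  have hv' : Differentiable ℝ (uncurry v) := differentiable_uncurry_dispersiveVelocity hη hu hη₀
  calc (3 : ℝ) • (η * materialDeriv u v)
      = (3 : ℝ) • (dT (η * v) + dX (u * (η * v))) := by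
        rw [dT_mul_add_dX_mul_of_continuity hη' hu' hv' hmass]
    _ = dT (dX (η ^ 3 * dX u)) + dX (u * dX (η ^ 3 * dX u)) := by
        rw [← smul_mul_dispersiveVelocity hη₀, ← hv, dT_const_smul, mul_smul_comm, dX_const_smul,
          smul_add]
    _ = dX (materialDeriv u (η ^ 3 * dX u)) := (dX_materialDeriv hu' hflux).symm
    _ = dX (η ^ 3 * (materialDeriv u (dX u) - 3 * dX u ^ 2)) := by
        rw [materialDeriv_pow_three_mul_dX hη' hu' (hux.differentiable two_ne_zero) hmass]

lemma dT_add_dX_mul_dispersiveVelocity (hη : ContDiff ℝ 2 (uncurry η))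
    (hu : ContDiff ℝ 3 (uncurry u)) (hη₀ : ∀ x t, η x t ≠ 0)
    (hmass : dT η + dX (η * u) = 0) (x t : ℝ) :
    dT (dispersiveVelocity η u) x t + dX (u * dispersiveVelocity η u) x t =
      dX (η ^ 3 * (materialDeriv u (dX u) - dX u ^ 2)) x t / (3 * η x t)
        - dX (η ^ 2 * dX u ^ 2) x t / 2 := by
  have hflux := congr_fun₂ (smul_mul_dispersiveVelocity hη₀ u) x t
  have htransport :=
    congr_fun₂ (smul_mul_materialDeriv_dispersiveVelocity hη hu hη₀ hmass) x t
  set v := dispersiveVelocity η u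
  have hη' : Differentiable ℝ (uncurry η) := hη.differentiable two_ne_zero
  have hu' : Differentiable ℝ (uncurry u) := hu.differentiable three_ne_zero
  have hux : ContDiff ℝ 2 (uncurry (dX u)) := contDiff_uncurry_dX hu (by norm_num)
  have hux' : Differentiable ℝ (uncurry (dX u)) := hux.differentiable two_ne_zero
  have hv' : Differentiable ℝ (uncurry v) := differentiable_uncurry_dispersiveVelocity hη hu hη₀
  have hDux : Differentiable ℝ (uncurry (materialDeriv u (dX u))) :=
    (differentiable_uncurry_dT hux).add (hu'.mul (differentiable_uncurry_dX hux))
  have hexpand := congr_fun₂ (two_mul_dX_pow_three_mul_sub_three_mul_sq hη' hux' hDux) x t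
  have hηxt := hη₀ x t
  rw [dX_mul hu' hv']
  simp only [materialDeriv, Pi.add_apply, Pi.sub_apply, Pi.mul_apply, Pi.smul_apply, smul_eq_mul,
    Pi.ofNat_apply] at hflux htransport hexpand ⊢
  field_simp
  linear_combination 2 * htransport + 2 * dX u x t * hflux + hexpand

end DispersiveVelocity

section CanonicalEquation

variable {η u v : ℝ → ℝ → ℝ}

lemma canonical_equation_sub_smul (hη : Differentiable ℝ (uncurry η))
    (hu : ContDiff ℝ 2 (uncurry u)) (hv : ContDiff ℝ 2 (uncurry v)) {g ε q x t : ℝ}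
    (hmom : dT u x t + u x t * dX u x t + g * dX η x t = ε ^ 2 * q)
    (htransport : dT v x t + dX (u * v) x t = q - dX (η ^ 2 * dX u ^ 2) x t / 2) :
    dT (u - ε ^ 2 • v) x t + (u - ε ^ 2 • v) x t * dX (u - ε ^ 2 • v) x t + g * dX η x t
        - ε ^ 2 / 2 * dX (η ^ 2 * dX (u - ε ^ 2 • v) ^ 2) x t =
      ε ^ 4 * (v x t * dX v x t + dX (η ^ 2 * dX u * dX v) x t)
        - ε ^ 6 / 2 * dX (η ^ 2 * dX v ^ 2) x t := by
  have hu' : Differentiable ℝ (uncurry u) := hu.differentiable two_ne_zero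
  have hv' : Differentiable ℝ (uncurry v) := hv.differentiable two_ne_zero
  have hcv : Differentiable ℝ (uncurry (ε ^ 2 • v)) := hv'.const_smul (ε ^ 2)
  have hux : Differentiable ℝ (uncurry (dX u)) := differentiable_uncurry_dX hu
  have hvx : Differentiable ℝ (uncurry (dX v)) := differentiable_uncurry_dX hv
  have hη2 : Differentiable ℝ (uncurry (η ^ 2)) := hη.pow 2
  rw [dX_mul hu' hv'] at htransport
  rw [dT_sub hu' hcv, dX_sub hu' hcv, dT_const_smul, dX_const_smul,
    dX_mul_sub_smul_sq hη2 hux hvx]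
  simp only [Pi.add_apply, Pi.sub_apply, Pi.mul_apply, Pi.smul_apply, smul_eq_mul]
    at htransport ⊢
  linear_combination hmom - ε ^ 2 * htransport

lemma canonical_equation_const_smul {ρ : ℝ} (hρ : ρ ≠ 0) (g ε : ℝ) (η w : ℝ → ℝ → ℝ) (x t : ℝ) :
    dT (ρ • w) x t + 1 / ρ * (ρ • w) x t * dX (ρ • w) x t + g * ρ * dX η x t
        - ε ^ 2 / (2 * ρ) * dX (η ^ 2 * dX (ρ • w) ^ 2) x t =
      ρ * (dT w x t + w x t * dX w x t + g * dX η x t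
        - ε ^ 2 / 2 * dX (η ^ 2 * dX w ^ 2) x t) := by
  rw [dT_const_smul, dX_const_smul, smul_pow, mul_smul_comm, dX_const_smul]
  simp only [Pi.smul_apply, smul_eq_mul]
  field_simp

end CanonicalEquation

theorem SGN_implies_canonical_momentum_equation_general {η u v μ : ℝ → ℝ → ℝ} {ρ g ε : ℝ}
    (hη : ContDiff ℝ 3 (uncurry η)) (hu : ContDiff ℝ 4 (uncurry u))
    (hη₀ : ∀ x t, η x t ≠ 0) (hρ : ρ ≠ 0)
    (hv : v = dispersiveVelocity η u) (hμ : μ = ρ • (u - ε ^ 2 • v))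
    (hmass : dT η + dX (η * u) = 0)
    (hmom : ∀ x t, dT u x t + u x t * dX u x t + g * dX η x t
      - ε ^ 2 / (3 * η x t) * dX (η ^ 3 * (materialDeriv u (dX u) - dX u ^ 2)) x t = 0)
    (x t : ℝ) :
    dT μ x t + 1 / ρ * μ x t * dX μ x t + g * ρ * dX η x t
        - ε ^ 2 / (2 * ρ) * dX (η ^ 2 * dX μ ^ 2) x t =
      ρ * ε ^ 4 * (v x t * dX v x t + dX (η ^ 2 * dX u * dX v) x t)
        - ρ * ε ^ 6 / 2 * dX (η ^ 2 * dX v ^ 2) x t := by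
  subst hv hμ
  have hv : ContDiff ℝ 2 (uncurry (dispersiveVelocity η u)) :=
    contDiff_uncurry_dispersiveVelocity (hη.of_le (by norm_num)) (hu.of_le (by norm_num)) hη₀
  have htransport := dT_add_dX_mul_dispersiveVelocity (hη.of_le (by norm_num))
    (hu.of_le (by norm_num)) hη₀ hmass x t
  have hmom' := (sub_eq_zero.mp (hmom x t)).trans (mul_comm_div _ _ _)
  rw [canonical_equation_const_smul hρ, canonical_equation_sub_smul
    (hη.differentiable three_ne_zero) (hu.of_le (by norm_num)) hv hmom' htransport]
  ring

/-- If `(η, ū)` solves the Serre–Green–Naghdi system, then the canonical momentum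
`μ = ρ(ū − ε²v)` satisfies the second canonical water-wave equation up to an
explicit `O(ε⁴)` remainder. -/
theorem SGN_implies_canonical_momentum_equation
    (η u : ℝ → ℝ → ℝ)
    (hη : ContDiff ℝ (⊤ : ℕ∞) (fun p : ℝ × ℝ => η p.1 p.2))
    (hu : ContDiff ℝ (⊤ : ℕ∞) (fun p : ℝ × ℝ => u p.1 p.2))
    (hηpos : ∀ x t, 0 < η x t)
    (ρ g ε : ℝ) (hρ : ρ ≠ 0)
    (v : ℝ → ℝ → ℝ)
    (hv : v = fun x t => dX (fun x' t' => (η x' t')^3 * dX u x' t') x t / (3 * η x t))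
    (μ : ℝ → ℝ → ℝ)
    (hμ : μ = fun x t => ρ * (u x t - ε^2 * v x t))
    (hmass : ∀ x t, dT η x t + dX (fun x' t' => η x' t' * u x' t') x t = 0)
    (hmom : ∀ x t,
      dT u x t + u x t * dX u x t + g * dX η x t
        - (ε^2/(3 * η x t)) *
            dX (fun x' t' => (η x' t')^3 *
              (dT (dX u) x' t' + u x' t' * dX (dX u) x' t' - (dX u x' t')^2)) x t = 0) :
    ∀ x t,
      dT μ x t + (1/ρ) * μ x t * dX μ x t + g * ρ * dX η x t
        - (ε^2/(2*ρ)) * dX (fun x' t' => (η x' t')^2 * (dX μ x' t')^2) x t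
      = ρ * ε^4 * (v x t * dX v x t
            + dX (fun x' t' => (η x' t')^2 * dX u x' t' * dX v x' t') x t)
        - (ρ * ε^6 / 2) * dX (fun x' t' => (η x' t')^2 * (dX v x' t')^2) x t := by
  exact SGN_implies_canonical_momentum_equation_general (contDiff_infty.mp hη 3)
    (contDiff_infty.mp hu 4) (fun x t => (hηpos x t).ne') hρ hv hμ (funext₂ hmass) hmom
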